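/- arXiv:2404.04119 — 3 statements merged into one kernel-verified Lean document; each statement's English description precedes it below -/
import Mathlib

section
/- Let X be a real Banach space, λ₀ ∈ ℝ, u₀ ∈ X, and let G : ℝ × X → X be a compact continuous map, i.e. G is continuous and maps bounded subsets of ℝ × X to relatively compact subsets of X. Set F(λ,u) := u − G(λ,u). If G(λ₀,u) ≡ u₀ for all u ∈ X, then the set S contains a pair of unbounded connected components C⁺ and C⁻, contained in [λ₀,∞) × X and (−∞,λ₀] × X respectively, such that C⁺ ∩ C⁻ = {(λ₀,u₀)}. -/
open Set Bornology

def GCDom {I V α : Type*} [LinearOrder α] (r : I → V → α) (σ : Finset V) : Prop :=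
  ∀ y, ∃ i, ∀ x ∈ σ, r i y ≤ r i x

open Classical in
theorem gc_door {I V α : Type*} [Fintype I] [Fintype V] [LinearOrder α]
    (r : I → V → α) (hr : ∀ i, Function.Injective (r i)) (τ : Finset V)
    (hcard : τ.card + 1 = Fintype.card I) (hne : τ.Nonempty)
    (hM : ∀ k, ∃ y, ∀ l, l ≠ k → ∃ x ∈ τ, r l x < r l y) :
    Even (Finset.univ.filter (fun σ : Finset V =>
      (σ.card = Fintype.card I ∧ GCDom r σ) ∧ τ ⊆ σ)).card := by
  by_cases hD : GCDom r τ
  swap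
  · rw [Finset.filter_false_of_mem]
    · simp
    · rintro σ - ⟨⟨-, h⟩, hs⟩
      exact hD fun y => (h y).imp fun i hi x hx => hi x (hs hx)
  have hm : ∀ i, ∃ m ∈ τ, ∀ x ∈ τ, r i m ≤ r i x := fun i => Finset.exists_min_image τ (r i) hne
  choose m hmτ hmin using hm
  have hsurj : ∀ x ∈ τ, ∃ i, m i = x := by
    intro x hx
    obtain ⟨i, hi⟩ := hD x
    exact ⟨i, hr i (le_antisymm (hmin i x hx) (hi _ (hmτ i)))⟩
  obtain ⟨a, -, b, -, hab, hmab⟩ : ∃ a ∈ (Finset.univ : Finset I), ∃ b ∈ (Finset.univ : Finset I),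
      a ≠ b ∧ m a = m b := by
    apply Finset.exists_ne_map_eq_of_card_lt_of_maps_to (t := τ)
    · rw [Finset.card_univ]; omega
    · intro i _; exact hmτ i
  -- surjectivity off a, b
  have hsk : ∀ k, k = a ∨ k = b → ∀ x ∈ τ, ∃ l, l ≠ k ∧ m l = x := by
    intro k hk x hx
    obtain ⟨i, hi⟩ := hsurj x hx
    by_cases hik : i = k
    · rcases hk with hk | hk
      · exact ⟨b, by rw [hk]; exact hab.symm, by rw [← hmab, ← hk, ← hik, hi]⟩
      · exact ⟨a, by rw [hk]; exact hab, by rw [hmab, ← hk, ← hik, hi]⟩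
    · exact ⟨i, hik, hi⟩
  have hks : ∀ k, (∀ x ∈ τ, ∃ l, l ≠ k ∧ m l = x) → k = a ∨ k = b := by
    intro k hk
    by_contra hcon
    push Not at hcon
    have hsub : τ ⊆ ((Finset.univ.erase k).erase a).image m := by
      intro x hx
      obtain ⟨l, hlk, hl⟩ := hk x hx
      rw [Finset.mem_image]
      by_cases hla : l = a
      · exact ⟨b, by simp [hab.symm, hcon.2.symm], by rw [← hmab, ← hla, hl]⟩
      · exact ⟨l, by simp [hla, hlk], hl⟩
    have h1 := (Finset.card_le_card hsub).trans Finset.card_image_le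
    rw [Finset.card_erase_of_mem (by simp [hcon.1.symm]), Finset.card_erase_of_mem (by simp),
      Finset.card_univ] at h1
    have := Finset.card_pos.mpr hne
    omega
  -- the maxima
  have hx : ∀ k, ∃ x, (∀ l, l ≠ k → r l (m l) < r l x) ∧
      ∀ y, (∀ l, l ≠ k → r l (m l) < r l y) → r k y ≤ r k x := by
    intro k
    obtain ⟨y, hy⟩ := hM k
    obtain ⟨x, hx1, hx2⟩ := Finset.exists_max_image
      (Finset.univ.filter (fun y => ∀ l, l ≠ k → r l (m l) < r l y)) (r k)
      ⟨y, by
        simp only [Finset.mem_filter, Finset.mem_univ, true_and]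
        intro l hl
        obtain ⟨x, hx, hxy⟩ := hy l hl
        exact (hmin l x hx).trans_lt hxy⟩
    refine ⟨x, by simpa using hx1, fun y hy => hx2 y (by simpa using hy)⟩
  choose X hX1 hX2 using hx
  have hXk : ∀ k, r k (X k) ≤ r k (m k) := by
    intro k
    obtain ⟨i, hi⟩ := hD (X k)
    by_cases hik : i = k
    · rw [← hik]; rw [← hik] at hi; exact hi _ (hmτ i)
    · exact absurd (hi _ (hmτ i)) (not_le.mpr (hX1 k i hik))
  have hXn : ∀ k, k = a ∨ k = b → X k ∉ τ := by
    intro k hk hmem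
    obtain ⟨l, hl, hlx⟩ := hsk k hk _ hmem
    have := hX1 k l hl
    rw [hlx] at this
    exact lt_irrefl _ this
  have hXD : ∀ k, GCDom r (insert (X k) τ) := by
    intro k y
    by_cases hy : ∀ l, l ≠ k → r l (m l) < r l y
    · refine ⟨k, fun x hx => ?_⟩
      have h0 := hX2 k y hy
      rcases Finset.mem_insert.mp hx with h | h
      · rw [h]; exact h0
      · exact h0.trans ((hXk k).trans (hmin k x h))
    · push Not at hy
      obtain ⟨l, hlk, hl⟩ := hy
      refine ⟨l, fun x hx => ?_⟩
      rcases Finset.mem_insert.mp hx with h | h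
      · rw [h]; exact hl.trans (hX1 k l hlk).le
      · exact hl.trans (hmin l x h)
  have hXab : X a ≠ X b := by
    intro h
    obtain ⟨i, hi⟩ := hD (X a)
    have h1 := hi _ (hmτ i)
    by_cases hia : i = a
    · rw [h] at h1
      exact absurd h1 (not_le.mpr (hX1 b i (by rw [hia]; exact hab)))
    · exact absurd h1 (not_le.mpr (hX1 a i hia))
  have key : (Finset.univ.filter (fun σ : Finset V =>
      (σ.card = Fintype.card I ∧ GCDom r σ) ∧ τ ⊆ σ)) = {insert (X a) τ, insert (X b) τ} := by
    ext σ
    simp only [Finset.mem_filter, Finset.mem_univ, true_and, Finset.mem_insert,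
      Finset.mem_singleton]
    constructor
    · rintro ⟨⟨hc, hDσ⟩, hsub⟩
      obtain ⟨x, hxτ, rfl⟩ := Finset.exists_eq_insert_iff.mpr ⟨hsub, by omega⟩
      -- index for x
      obtain ⟨k, hk⟩ := hDσ x
      have hstr : ∀ l, l ≠ k → r l (m l) < r l x := by
        by_contra hcon
        push Not at hcon
        obtain ⟨l, hlk, hl⟩ := hcon
        have hsub2 : τ ⊆ ((Finset.univ.erase k).erase l).image m := by
          intro z hz
          obtain ⟨i, hi⟩ := hDσ z
          have hiz : m i = z := hr i (le_antisymm (hmin i z hz)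
            (hi _ (Finset.mem_insert_of_mem (hmτ i))))
          have hizx := hi x (Finset.mem_insert_self _ _)
          have hzx : z ≠ x := fun h => hxτ (h ▸ hz)
          refine Finset.mem_image.mpr ⟨i, ?_, hiz⟩
          have hik : i ≠ k := by
            rintro rfl
            exact hzx (hr i (le_antisymm hizx (hk z (Finset.mem_insert_of_mem hz))))
          have hil : i ≠ l := by
            rintro rfl
            rw [hiz] at hl
            exact hzx (hr i (le_antisymm hizx hl))
          simp [hik, hil]
        have h1 := (Finset.card_le_card hsub2).trans Finset.card_image_le
        rw [Finset.card_erase_of_mem (by simp [hlk]), Finset.card_erase_of_mem (by simp),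
          Finset.card_univ] at h1
        have := Finset.card_pos.mpr hne
        omega
      have hkab : k = a ∨ k = b := by
        apply hks
        intro z hz
        obtain ⟨i, hi⟩ := hDσ z
        refine ⟨i, ?_, hr i (le_antisymm (hmin i z hz)
            (hi _ (Finset.mem_insert_of_mem (hmτ i))))⟩
        rintro rfl
        have hizx := hi x (Finset.mem_insert_self _ _)
        have : z = x := hr i (le_antisymm hizx (hk z (Finset.mem_insert_of_mem hz)))
        exact hxτ (this ▸ hz)
      have hxX : x = X k := by
        apply hr k
        apply le_antisymm (hX2 k x hstr)
        obtain ⟨i, hi⟩ := hDσ (X k)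
        by_cases hik : i = k
        · rw [← hik]; rw [← hik] at hi; exact hi x (Finset.mem_insert_self _ _)
        · exact absurd (hi _ (Finset.mem_insert_of_mem (hmτ i))) (not_le.mpr (hX1 k i hik))
      rcases hkab with h | h
      · left; rw [hxX, h]
      · right; rw [hxX, h]
    · rintro (rfl | rfl)
      · exact ⟨⟨by rw [Finset.card_insert_of_notMem (hXn a (Or.inl rfl)), hcard], hXD a⟩,
          Finset.subset_insert _ _⟩
      · exact ⟨⟨by rw [Finset.card_insert_of_notMem (hXn b (Or.inr rfl)), hcard], hXD b⟩,
          Finset.subset_insert _ _⟩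
  rw [key, Finset.card_pair]
  · exact even_two
  · intro h
    have : X a ∈ insert (X b) τ := h ▸ Finset.mem_insert_self _ _
    rcases Finset.mem_insert.mp this with h | h
    · exact hXab h
    · exact hXn a (Or.inl rfl) h

open Classical in
theorem gc_room {I V : Type*} [Fintype I] [Fintype V] (c : V → I) (i0 : I) (σ : Finset V)
    (hcard : σ.card = Fintype.card I) (hc : σ.image c ≠ Finset.univ) :
    Even (Finset.univ.filter (fun τ : Finset V =>
      (τ.card + 1 = Fintype.card I ∧ τ.image c = Finset.univ.erase i0) ∧ τ ⊆ σ)).card := by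
  by_cases hex : ∃ τ : Finset V,
      (τ.card + 1 = Fintype.card I ∧ τ.image c = Finset.univ.erase i0) ∧ τ ⊆ σ
  swap
  · rw [Finset.filter_false_of_mem]
    · simp
    · intro τ _ h; exact hex ⟨τ, h⟩
  obtain ⟨τ, ⟨hτ, hτc⟩, hsub⟩ := hex
  obtain ⟨x, hxτ, rfl⟩ := Finset.exists_eq_insert_iff.mpr ⟨hsub, by omega⟩
  have hinj : Set.InjOn c τ := by
    apply Finset.card_image_iff.mp
    rw [hτc, Finset.card_erase_of_mem (Finset.mem_univ _), Finset.card_univ]; omega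
  have hx0 : c x ≠ i0 := by
    intro h
    apply hc
    rw [Finset.image_insert, hτc, h, Finset.insert_erase (Finset.mem_univ _)]
  have : c x ∈ τ.image c := by rw [hτc]; simp [hx0]
  obtain ⟨x', hx', hxx'⟩ := Finset.mem_image.mp this
  have hne : x ≠ x' := fun h => hxτ (h ▸ hx')
  have himg : ((insert x τ).erase x').image c = Finset.univ.erase i0 := by
    rw [← hτc]
    ext j
    simp only [Finset.mem_image, Finset.mem_erase, Finset.mem_insert]
    constructor
    · rintro ⟨z, ⟨hz, rfl | hz'⟩, rfl⟩
      · exact ⟨x', hx', hxx'⟩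
      · exact ⟨z, hz', rfl⟩
    · rintro ⟨z, hz, rfl⟩
      by_cases h : z = x'
      · exact ⟨x, ⟨hne, Or.inl rfl⟩, by rw [h, hxx']⟩
      · exact ⟨z, ⟨h, Or.inr hz⟩, rfl⟩
  have key : (Finset.univ.filter (fun τ' : Finset V =>
      (τ'.card + 1 = Fintype.card I ∧ τ'.image c = Finset.univ.erase i0) ∧ τ' ⊆ insert x τ))
      = {τ, (insert x τ).erase x'} := by
    ext τ'
    simp only [Finset.mem_filter, Finset.mem_univ, true_and, Finset.mem_insert,
      Finset.mem_singleton]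
    constructor
    · rintro ⟨⟨h1, h2⟩, h3⟩
      have hinj' : Set.InjOn c τ' := by
        apply Finset.card_image_iff.mp
        rw [h2, Finset.card_erase_of_mem (Finset.mem_univ _), Finset.card_univ]; omega
      by_cases hx1 : x ∈ τ'
      · right
        have hx2 : x' ∉ τ' := fun h => hne (hinj' hx1 h hxx'.symm)
        apply Finset.eq_of_subset_of_card_le
        · intro z hz
          exact Finset.mem_erase.mpr ⟨fun h => hx2 (h ▸ hz), h3 hz⟩
        · rw [Finset.card_erase_of_mem (Finset.mem_insert_of_mem hx'), hcard]; omega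
      · left
        apply Finset.eq_of_subset_of_card_le
        · intro z hz
          exact (Finset.mem_insert.mp (h3 hz)).resolve_left (fun h => hx1 (h ▸ hz))
        · omega
    · rintro (rfl | rfl)
      · exact ⟨⟨hτ, hτc⟩, hsub⟩
      · refine ⟨⟨?_, himg⟩, Finset.erase_subset _ _⟩
        rw [Finset.card_erase_of_mem (Finset.mem_insert_of_mem hx'), hcard]; omega
  rw [key, Finset.card_pair]
  · exact even_two
  · intro h
    have h2 := hx'
    rw [h] at h2
    simp at h2

open Classical in
theorem gc_scarf {I V α : Type*} [Fintype I] [Fintype V] [LinearOrder α]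
    (r : I → V → α) (hr : ∀ i, Function.Injective (r i)) (e : I → V)
    (h1 : ∀ i v, v ≠ e i → r i (e i) < r i v)
    (h2 : ∀ i j, i ≠ j → ∀ v, (∀ k, v ≠ e k) → r i v < r i (e j))
    (c : V → I) (hc : ∀ i, c (e i) = i) (v0 : V) (hv0 : ∀ k, v0 ≠ e k) (i0 : I) :
    ∃ σ : Finset V, σ.card = Fintype.card I ∧ GCDom r σ ∧ σ.image c = Finset.univ := by
  by_contra hcon
  push Not at hcon
  have heinj : Function.Injective e := fun i j h => by rw [← hc i, h, hc]
  have hcount := Finset.sum_card_bipartiteAbove_eq_sum_card_bipartiteBelow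
    (s := Finset.univ.filter (fun τ : Finset V =>
      τ.card + 1 = Fintype.card I ∧ τ.image c = Finset.univ.erase i0))
    (t := Finset.univ.filter (fun σ : Finset V => σ.card = Fintype.card I ∧ GCDom r σ))
    (fun τ σ => τ ⊆ σ)
  have hR : Even (∑ σ ∈ Finset.univ.filter (fun σ : Finset V => σ.card = Fintype.card I ∧ GCDom r σ),
      (Finset.bipartiteBelow (fun τ σ => τ ⊆ σ) (Finset.univ.filter (fun τ : Finset V =>
      τ.card + 1 = Fintype.card I ∧ τ.image c = Finset.univ.erase i0)) σ).card) := by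
    apply Finset.even_sum
    intro σ hσ
    simp only [Finset.mem_filter, Finset.mem_univ, true_and] at hσ
    rw [Finset.bipartiteBelow, Finset.filter_filter]
    exact gc_room c i0 σ hσ.1 (hcon σ hσ.1 hσ.2)
  rw [← hcount] at hR
  set τ0 : Finset V := (Finset.univ.erase i0).image e with hτ0
  have hI : 0 < Fintype.card I := Fintype.card_pos_iff.mpr ⟨i0⟩
  have hτ0card : τ0.card + 1 = Fintype.card I := by
    rw [hτ0, Finset.card_image_of_injective _ heinj, Finset.card_erase_of_mem (Finset.mem_univ _),
      Finset.card_univ]; omega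
  have hτ0mem : τ0 ∈ Finset.univ.filter (fun τ : Finset V =>
      τ.card + 1 = Fintype.card I ∧ τ.image c = Finset.univ.erase i0) := by
    simp only [Finset.mem_filter, Finset.mem_univ, true_and]
    refine ⟨hτ0card, ?_⟩
    rw [hτ0, Finset.image_image]
    have : c ∘ e = id := funext hc
    rw [this, Finset.image_id]
  rw [← Finset.add_sum_erase _ _ hτ0mem] at hR
  have hE : Even (∑ τ ∈ (Finset.univ.filter (fun τ : Finset V =>
      τ.card + 1 = Fintype.card I ∧ τ.image c = Finset.univ.erase i0)).erase τ0,
      (Finset.bipartiteAbove (fun τ σ => τ ⊆ σ) (Finset.univ.filter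
        (fun σ : Finset V => σ.card = Fintype.card I ∧ GCDom r σ)) τ).card) := by
    apply Finset.even_sum
    intro τ hτ
    simp only [Finset.mem_erase, Finset.mem_filter, Finset.mem_univ, true_and] at hτ
    obtain ⟨hne, hcard, himg⟩ := hτ
    rw [Finset.bipartiteAbove, Finset.filter_filter]
    have hex : ∃ v ∈ τ, ∀ k, v ≠ e k := by
      by_contra hcon2
      push Not at hcon2
      apply hne
      apply Finset.eq_of_subset_of_card_le
      · intro v hv
        obtain ⟨k, rfl⟩ := hcon2 v hv
        have : c (e k) ∈ τ.image c := Finset.mem_image_of_mem _ hv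
        rw [himg, hc] at this
        exact Finset.mem_image_of_mem _ this
      · omega
    obtain ⟨v, hv, hvs⟩ := hex
    exact gc_door r hr τ hcard ⟨v, hv⟩ fun k => ⟨e k, fun l hl => ⟨v, hv, h2 l k hl v hvs⟩⟩
  have hO : (Finset.bipartiteAbove (fun τ σ => τ ⊆ σ) (Finset.univ.filter
        (fun σ : Finset V => σ.card = Fintype.card I ∧ GCDom r σ)) τ0).card = 1 := by
    obtain ⟨x, hx1, hx2⟩ := Finset.exists_max_image
      (Finset.univ.filter (fun v : V => ∀ k, v ≠ e k)) (r i0) ⟨v0, by simpa using hv0⟩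
    simp only [Finset.mem_filter, Finset.mem_univ, true_and] at hx1 hx2
    have hns : ∀ v, (∀ k, v ≠ e k) → v ∉ τ0 := by
      intro v hv h
      rw [hτ0, Finset.mem_image] at h
      obtain ⟨k, -, hk⟩ := h
      exact hv k hk.symm
    rw [Finset.card_eq_one]
    refine ⟨insert x τ0, ?_⟩
    ext σ
    simp only [Finset.bipartiteAbove, Finset.mem_filter, Finset.mem_univ, true_and,
      Finset.mem_singleton]
    constructor
    · rintro ⟨⟨hcσ, hDσ⟩, hsub⟩
      obtain ⟨z, hzτ, rfl⟩ := Finset.exists_eq_insert_iff.mpr ⟨hsub, by omega⟩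
      have hine : ∀ i y, (∀ k, y ≠ e k) → (∀ w ∈ insert z τ0, r i y ≤ r i w) → i = i0 := by
        intro i y hy h
        by_contra hi
        have hm : e i ∈ insert z τ0 := Finset.mem_insert_of_mem
          (Finset.mem_image_of_mem _ (by simp [hi]))
        exact absurd (h _ hm) (not_le.mpr (h1 i y (hy i)))
      obtain ⟨i, hi⟩ := hDσ x
      have hii := hine i x hx1 hi
      subst hii
      have hxz := hi z (Finset.mem_insert_self _ _)
      have hzs : ∀ k, z ≠ e k := by
        rintro k rfl
        by_cases hk : k = i
        · subst hk
          exact absurd hxz (not_le.mpr (h1 k x (hx1 k)))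
        · exact hzτ (Finset.mem_image_of_mem _ (by simp [hk]))
      rw [hr i (le_antisymm (hx2 z hzs) hxz)]
    · rintro rfl
      refine ⟨⟨by rw [Finset.card_insert_of_notMem (hns x hx1), hτ0card], ?_⟩,
        Finset.subset_insert _ _⟩
      intro y
      by_cases hy : ∃ k, k ≠ i0 ∧ y = e k
      · obtain ⟨k, -, rfl⟩ := hy
        refine ⟨k, fun w _ => ?_⟩
        by_cases hw : w = e k
        · rw [hw]
        · exact (h1 k w hw).le
      · push Not at hy
        refine ⟨i0, fun w hw => ?_⟩
        by_cases hy0 : y = e i0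
        · rw [hy0]
          by_cases hw : w = e i0
          · rw [hw]
          · exact (h1 i0 w hw).le
        · have hys : ∀ k, y ≠ e k := fun k => by
            by_cases hk : k = i0
            · rw [hk]; exact hy0
            · exact hy k hk
          rcases Finset.mem_insert.mp hw with h | h
          · rw [h]; exact hx2 y hys
          · rw [hτ0, Finset.mem_image] at h
            obtain ⟨k, hk, rfl⟩ := h
            exact (h2 i0 k (Finset.ne_of_mem_erase hk).symm y hys).le
  rw [hO] at hR
  have h3 := (Nat.even_add.mp hR).mpr hE
  exact absurd h3 (by decide)

open Classical in
theorem gc_grid {I : Type*} [Fintype I] [Nonempty I] (m : ℕ) (color : (I → ℕ) → I) :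
    ∃ (C : Finset I) (K : I → I → ℕ), C.Nonempty ∧
      (∀ i ∈ C, ∑ j, K i j = m ∧ color (K i) = i) ∧
      (∀ i ∈ C, ∀ i' ∈ C, ∀ j, K i j ≤ K i' j + Fintype.card I) ∧
      (∀ i ∈ C, ∀ j, j ∉ C → K i j ≤ Fintype.card I) := by
  let T := {k : I → Fin (m + 1) // ∑ i, (k i : ℕ) = m}
  let V := T ⊕ I
  let i0 : I := Classical.arbitrary I
  let h : I → V → ℕ := fun i v => match v with
    | Sum.inl k => (k.1 i : ℕ) + 1
    | Sum.inr j => if i = j then 0 else m + 2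
  let r : I → V → ℕ := fun i v => h i v * Fintype.card V + (Fintype.equivFin V v : ℕ)
  let c : V → I := fun v => match v with
    | Sum.inl k => color (fun i => (k.1 i : ℕ))
    | Sum.inr j => j
  have hlt : ∀ i v w, h i v < h i w → r i v < r i w := fun i v w hh => by
    have e1 := (Fintype.equivFin V v).2
    have e2 : (h i v + 1) * Fintype.card V ≤ h i w * Fintype.card V := Nat.mul_le_mul_right _ hh
    rw [add_mul] at e2
    simp only [r]
    omega
  have hle : ∀ i v w, r i v ≤ r i w → h i v ≤ h i w := fun i v w hh => by
    by_contra hc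
    exact absurd hh (not_le.mpr (hlt i w v (not_le.mp hc)))
  have hmk : ∀ y : I → ℕ, ∑ i, y i = m → ∃ k : T, ∀ i, (k.1 i : ℕ) = y i := by
    intro y hy
    have hb : ∀ i, y i < m + 1 := fun i => by
      have := Finset.single_le_sum (f := y) (fun j _ => Nat.zero_le _) (Finset.mem_univ i)
      omega
    exact ⟨⟨fun i => ⟨y i, hb i⟩, hy⟩, fun i => rfl⟩
  obtain ⟨k0, -⟩ := hmk (Pi.single i0 m) (by simp)
  obtain ⟨σ, -, hD, hcol⟩ := gc_scarf r
    (by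
      intro i v w hvw
      have h0 : h i v = h i w := by
        rcases lt_trichotomy (h i v) (h i w) with hh | hh | hh
        · exact absurd hvw (hlt i v w hh).ne
        · exact hh
        · exact absurd hvw (hlt i w v hh).ne'
      have h1 : (Fintype.equivFin V v : ℕ) = (Fintype.equivFin V w : ℕ) := by
        simp only [r, h0] at hvw
        omega
      exact (Fintype.equivFin V).injective (Fin.ext h1))
    (fun i => (Sum.inr i : V))
    (by
      intro i v hv
      refine hlt i (Sum.inr i) v ?_
      rcases v with k | j
      · simp [h]
      · have : i ≠ j := fun hij => hv (by rw [hij])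
        simp [h, this])
    (by
      intro i j hij v hv
      refine hlt i v (Sum.inr j) ?_
      rcases v with k | l
      · have := (k.1 i).2
        simp only [h, hij, if_false]
        omega
      · exact absurd rfl (hv l))
    c (fun i => rfl) (Sum.inl k0) (by intro k hk; cases hk) i0
  let C : Finset I := Finset.univ.filter (fun i => (Sum.inr i : V) ∉ σ)
  have hC : ∀ i, i ∈ C ↔ (Sum.inr i : V) ∉ σ := fun i => by simp [C]
  have hDC : ∀ k : T, ∃ i ∈ C, ∀ k' : T, (Sum.inl k' : V) ∈ σ → (k.1 i : ℕ) ≤ k'.1 i := by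
    intro k
    obtain ⟨i, hi⟩ := hD (Sum.inl k)
    refine ⟨i, ?_, ?_⟩
    · rw [hC]
      intro hmem
      have := hle i (Sum.inl k) (Sum.inr i) (hi _ hmem)
      simp [h] at this
    · intro k' hk'
      have := hle i (Sum.inl k) (Sum.inl k') (hi _ hk')
      simpa [h] using this
  have hK : ∀ i, ∃ k : T, i ∈ C → ((Sum.inl k : V) ∈ σ ∧ color (fun i => (k.1 i : ℕ)) = i) := by
    intro i
    by_cases hi : i ∈ C
    swap
    · exact ⟨k0, fun h => absurd h hi⟩
    have : i ∈ σ.image c := by rw [hcol]; exact Finset.mem_univ _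
    obtain ⟨v, hv, hvi⟩ := Finset.mem_image.mp this
    rcases v with k | j
    · exact ⟨k, fun _ => ⟨hv, hvi⟩⟩
    · have hji : j = i := hvi
      subst hji
      exact absurd hv ((hC j).mp hi)
  choose K hK using hK
  obtain ⟨i1, hi1, -⟩ := hDC k0
  have hμ : ∀ i, ∃ μ : ℕ, (∃ k : T, (Sum.inl k : V) ∈ σ ∧ (k.1 i : ℕ) = μ) ∧
      ∀ k : T, (Sum.inl k : V) ∈ σ → μ ≤ (k.1 i : ℕ) := by
    intro i
    obtain ⟨k, hk1, hk2⟩ := Finset.exists_min_image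
      (Finset.univ.filter (fun k : T => (Sum.inl k : V) ∈ σ)) (fun k => (k.1 i : ℕ))
      ⟨K i1, by simpa using (hK i1 hi1).1⟩
    refine ⟨k.1 i, ⟨k, by simpa using hk1, rfl⟩, fun k' hk' => hk2 k' (by simpa using hk')⟩
  choose μ hμ1 hμ2 using hμ
  have hsum : m < ∑ i ∈ C, (μ i + 1) := by
    by_contra hcon
    push Not at hcon
    obtain ⟨y, hy⟩ := hmk (fun i => (if i ∈ C then μ i + 1 else 0) +
      (if i = i1 then m - ∑ i ∈ C, (μ i + 1) else 0)) (by
        rw [Finset.sum_add_distrib, Finset.sum_ite_mem, Finset.univ_inter, Finset.sum_ite_eq']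
        simp only [Finset.mem_univ, if_true]
        omega)
    obtain ⟨i, hi, hi2⟩ := hDC y
    obtain ⟨k, hk, hk2⟩ := hμ1 i
    have h3 := hi2 k hk
    rw [hy, hk2] at h3
    simp only [hi, if_true] at h3
    omega
  have hcardC : C.card ≤ Fintype.card I := Finset.card_le_univ C
  rw [Finset.sum_add_distrib, Finset.sum_const, smul_eq_mul, mul_one] at hsum
  have hup : ∀ k : T, (Sum.inl k : V) ∈ σ → ∀ i ∈ C, (k.1 i : ℕ) ≤ μ i + Fintype.card I := by
    intro k hk i hi
    have e1 : ∑ j ∈ C, (k.1 j : ℕ) ≤ m := by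
      exact (Finset.sum_le_sum_of_subset (Finset.subset_univ _)).trans k.2.le
    have e2 : ∑ j ∈ C.erase i, μ j ≤ ∑ j ∈ C.erase i, (k.1 j : ℕ) :=
      Finset.sum_le_sum fun j _ => hμ2 j k hk
    have e3 := Finset.add_sum_erase C μ hi
    have e4 := Finset.add_sum_erase C (fun j => (k.1 j : ℕ)) hi
    omega
  have hup2 : ∀ k : T, (Sum.inl k : V) ∈ σ → ∀ i, i ∉ C → (k.1 i : ℕ) ≤ Fintype.card I := by
    intro k hk i hi
    have e1 : ∑ j ∈ insert i C, (k.1 j : ℕ) ≤ m := by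
      exact (Finset.sum_le_sum_of_subset (Finset.subset_univ _)).trans k.2.le
    rw [Finset.sum_insert hi] at e1
    have e2 : ∑ j ∈ C, μ j ≤ ∑ j ∈ C, (k.1 j : ℕ) :=
      Finset.sum_le_sum fun j _ => hμ2 j k hk
    omega
  refine ⟨C, fun i j => ((K i).1 j : ℕ), ⟨i1, hi1⟩, fun i hi => ⟨(K i).2, (hK i hi).2⟩, ?_,
    fun i hi j hj => hup2 _ (hK i hi).1 j hj⟩
  intro i hi i' hi' j
  show ((K i).1 j : ℕ) ≤ ((K i').1 j : ℕ) + Fintype.card I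
  by_cases hj : j ∈ C
  · have := hup _ (hK i hi).1 j hj
    have := hμ2 j _ (hK i' hi').1
    omega
  · have := hup2 _ (hK i hi).1 j hj
    omega

theorem gc_brouwer {I : Type*} [Fintype I] [Nonempty I] (f : (I → ℝ) → (I → ℝ))
    (hf : ContinuousOn f (stdSimplex ℝ I)) (hmaps : MapsTo f (stdSimplex ℝ I) (stdSimplex ℝ I))
    {ε : ℝ} (hε : 0 < ε) : ∃ w ∈ stdSimplex ℝ I, ∀ i, |f w i - w i| ≤ ε := by
  have hu := (isCompact_stdSimplex ℝ I).uniformContinuousOn_of_continuous hf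
  rw [Metric.uniformContinuousOn_iff] at hu
  set n : ℝ := (Fintype.card I : ℝ) with hn
  have hn1 : 1 ≤ n := by
    rw [hn]; exact_mod_cast Fintype.card_pos (α := I)
  set η : ℝ := ε / (2 * n) with hη
  have hη0 : 0 < η := by positivity
  obtain ⟨δ, hδ, hfδ⟩ := hu η hη0
  obtain ⟨m, hm⟩ := exists_nat_gt (n / min δ η)
  have hmin : 0 < min δ η := lt_min hδ hη0
  have hm0 : (0 : ℝ) < m := lt_trans (by positivity) hm
  have hnm : n / m < min δ η := by
    rw [div_lt_iff₀ hm0]; rw [div_lt_iff₀ hmin] at hm; linarith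
  have hcol : ∀ x ∈ stdSimplex ℝ I, ∃ i, x i ≤ f x i := by
    intro x hx
    by_contra hcon
    push Not at hcon
    have := Finset.sum_lt_sum_of_nonempty (Finset.univ_nonempty (α := I)) (fun i _ => hcon i)
    rw [(hmaps hx).2, hx.2] at this
    exact lt_irrefl _ this
  let P : (I → ℕ) → I → ℝ := fun k i => (k i : ℝ) / m
  have hP : ∀ k : I → ℕ, ∑ i, k i = m → P k ∈ stdSimplex ℝ I := by
    intro k hk
    refine ⟨fun i => by positivity, ?_⟩
    rw [← Finset.sum_div, ← Nat.cast_sum, hk, div_self hm0.ne']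
  have hcol' : ∀ k : I → ℕ, ∃ i, ∑ i, k i = m → P k i ≤ f (P k) i := by
    intro k
    by_cases hk : ∑ i, k i = m
    · obtain ⟨i, hi⟩ := hcol _ (hP k hk)
      exact ⟨i, fun _ => hi⟩
    · exact ⟨Classical.arbitrary I, fun h => absurd h hk⟩
  choose color hcolor using hcol'
  obtain ⟨C, K, ⟨i1, hi1⟩, hK1, hK2, hK3⟩ := gc_grid m color
  have hKm : ∀ i ∈ C, P (K i) ∈ stdSimplex ℝ I := fun i hi => hP _ (hK1 i hi).1
  have hdist : ∀ i ∈ C, ∀ i' ∈ C, ∀ j, P (K i) j - P (K i') j ≤ n / m := by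
    intro i hi i' hi' j
    have h : ((K i j : ℕ) : ℝ) ≤ K i' j + n := by
      rw [hn]; exact_mod_cast hK2 i hi i' hi' j
    simp only [P]
    rw [← sub_div]
    gcongr
    linarith
  have hlow : ∀ j, P (K i1) j - 2 * η ≤ f (P (K i1)) j := by
    intro j
    have hnη : n / m < η := hnm.trans_le (min_le_right _ _)
    by_cases hj : j ∈ C
    · have hd : dist (P (K i1)) (P (K j)) < δ := by
        refine lt_of_le_of_lt ?_ (hnm.trans_le (min_le_left _ _))
        rw [dist_pi_le_iff (by positivity)]
        intro l
        rw [Real.dist_eq, abs_le]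
        have := hdist i1 hi1 j hj l
        have := hdist j hj i1 hi1 l
        constructor <;> linarith
      have h1 := (dist_le_pi_dist _ _ j).trans_lt (hfδ _ (hKm i1 hi1) _ (hKm j hj) hd)
      rw [Real.dist_eq, abs_lt] at h1
      have h2 := hcolor (K j) (hK1 j hj).1
      rw [(hK1 j hj).2] at h2
      have h3 := hdist i1 hi1 j hj j
      linarith [h1.1]
    · have h1 := (hmaps (hKm i1 hi1)).1 j
      have h2 : P (K i1) j ≤ n / m := by
        simp only [P]
        gcongr
        rw [hn]; exact_mod_cast hK3 i1 hi1 j hj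
      linarith
  have h2n : 2 * η * n = ε := by rw [hη]; field_simp
  have h2η : 2 * η ≤ ε := by rw [← h2n]; nlinarith
  refine ⟨P (K i1), hKm i1 hi1, fun i => ?_⟩
  rw [abs_le]
  refine ⟨by linarith [hlow i], ?_⟩
  classical
  have e1 : ∑ j, (f (P (K i1)) j - P (K i1) j + 2 * η) = ε := by
    rw [Finset.sum_add_distrib, Finset.sum_sub_distrib, (hmaps (hKm i1 hi1)).2, (hKm i1 hi1).2,
      Finset.sum_const, Finset.card_univ, nsmul_eq_mul, ← hn]
    linarith
  have e2 := Finset.single_le_sum (f := fun j => f (P (K i1)) j - P (K i1) j + 2 * η)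
    (fun j _ => by linarith [hlow j]) (Finset.mem_univ i)
  linarith

theorem gc_schauder_approx {Y : Type*} [NormedAddCommGroup Y] [NormedSpace ℝ Y]
    (T : Y → Y) (hT : Continuous T) (K : Set Y) (hK : IsCompact K) (hTK : ∀ y, T y ∈ K)
    {ε : ℝ} (hε : 0 < ε) : ∃ y, ‖T y - y‖ ≤ 2 * ε := by
  classical
  obtain ⟨t, htf, htc⟩ := Metric.totallyBounded_iff.mp hK.totallyBounded ε hε
  have : Fintype t := htf.fintype
  have hcov : ∀ y, ∃ i : t, dist (T y) i < ε := by
    intro y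
    have := htc (hTK y)
    simp only [mem_iUnion, Metric.mem_ball] at this
    obtain ⟨i, hi, h⟩ := this
    exact ⟨⟨i, hi⟩, h⟩
  have : Nonempty t := ⟨(hcov 0).choose⟩
  let g : t → Y → ℝ := fun i y => max 0 (ε - dist (T y) i)
  have hg0 : ∀ i y, 0 ≤ g i y := fun i y => le_max_left _ _
  have hgpos : ∀ y, 0 < ∑ i, g i y := by
    intro y
    obtain ⟨i, hi⟩ := hcov y
    exact Finset.sum_pos' (fun i _ => hg0 i y) ⟨i, Finset.mem_univ _,
      lt_max_of_lt_right (by linarith)⟩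
  have hgc : ∀ i, Continuous (g i) := fun i => by fun_prop
  let s : (t → ℝ) → Y := fun w => ∑ i, w i • (i : Y)
  have hs : Continuous s := by fun_prop
  let f : (t → ℝ) → (t → ℝ) := fun w i => g i (s w) / ∑ j, g j (s w)
  have hf : Continuous f := by
    refine continuous_pi fun i => ?_
    refine Continuous.div ((hgc i).comp hs) ?_ (fun w => (hgpos _).ne')
    exact continuous_finsetSum _ fun j _ => (hgc j).comp hs
  have hfm : ∀ w, f w ∈ stdSimplex ℝ t := fun w =>
    ⟨fun i => div_nonneg (hg0 _ _) (hgpos _).le, by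
      simp only [f]; rw [← Finset.sum_div, div_self (hgpos _).ne']⟩
  set R : ℝ := ∑ i : t, ‖(i : Y)‖ with hR
  have hR0 : 0 ≤ R := Finset.sum_nonneg fun i _ => norm_nonneg _
  obtain ⟨w, -, hw⟩ := gc_brouwer f hf.continuousOn (fun w _ => hfm w)
    (ε := ε / (R + 1)) (by positivity)
  refine ⟨s w, ?_⟩
  have h1 : ‖T (s w) - s (f w)‖ ≤ ε := by
    have : T (s w) - s (f w) = ∑ i, f w i • (T (s w) - (i : Y)) := by
      simp only [smul_sub, Finset.sum_sub_distrib, ← Finset.sum_smul, (hfm w).2, one_smul, s]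
    rw [this]
    calc ‖∑ i, f w i • (T (s w) - (i : Y))‖ ≤ ∑ i, ‖f w i • (T (s w) - (i : Y))‖ :=
          norm_sum_le _ _
      _ ≤ ∑ i, f w i * ε := by
          refine Finset.sum_le_sum fun i _ => ?_
          rw [norm_smul, Real.norm_of_nonneg ((hfm w).1 i)]
          by_cases hd : dist (T (s w)) i < ε
          · rw [dist_eq_norm] at hd
            exact mul_le_mul_of_nonneg_left hd.le ((hfm w).1 i)
          · have : f w i = 0 := by
              simp only [f, g]
              rw [max_eq_left (by linarith), zero_div]
            rw [this]; simp
      _ = ε := by rw [← Finset.sum_mul, (hfm w).2, one_mul]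
  have h2 : ‖s (f w) - s w‖ ≤ ε := by
    have : s (f w) - s w = ∑ i, (f w i - w i) • (i : Y) := by
      simp only [sub_smul, Finset.sum_sub_distrib, s]
    rw [this]
    calc ‖∑ i, (f w i - w i) • (i : Y)‖ ≤ ∑ i, ‖(f w i - w i) • (i : Y)‖ := norm_sum_le _ _
      _ ≤ ∑ i : t, ε / (R + 1) * ‖(i : Y)‖ := by
          refine Finset.sum_le_sum fun i _ => ?_
          rw [norm_smul, Real.norm_eq_abs]
          exact mul_le_mul_of_nonneg_right (hw i) (norm_nonneg _)
      _ = ε * (R / (R + 1)) := by rw [← Finset.mul_sum, ← hR]; ring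
      _ ≤ ε := by
          apply mul_le_of_le_one_right hε.le
          rw [div_le_one (by positivity)]; linarith
  calc ‖T (s w) - s w‖ = ‖(T (s w) - s (f w)) + (s (f w) - s w)‖ := by congr 1; abel
    _ ≤ _ := norm_add_le _ _
    _ ≤ 2 * ε := by linarith

theorem gc_schauder {Y : Type*} [NormedAddCommGroup Y] [NormedSpace ℝ Y]
    (T : Y → Y) (hT : Continuous T) (K : Set Y) (hK : IsCompact K) (hTK : ∀ y, T y ∈ K) :
    ∃ y, T y = y := by
  have h : ∀ n : ℕ, ∃ y, ‖T y - y‖ ≤ 2 * (1 / ((n : ℝ) + 1)) := fun n =>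
    gc_schauder_approx T hT K hK hTK (by positivity)
  choose y hy using h
  obtain ⟨z, -, φ, hφ, hz⟩ := hK.tendsto_subseq (fun n => hTK (y n))
  have h0 : Filter.Tendsto (fun n => T (y n) - y n) Filter.atTop (nhds 0) := by
    apply squeeze_zero_norm hy
    simpa using (tendsto_one_div_add_atTop_nhds_zero_nat (𝕜 := ℝ)).const_mul 2
  have h1 : Filter.Tendsto (fun n => y (φ n)) Filter.atTop (nhds z) := by
    have := hz.sub (h0.comp hφ.tendsto_atTop)
    simpa using this
  refine ⟨z, ?_⟩
  exact tendsto_nhds_unique ((hT.tendsto z).comp h1) hz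

theorem gc_half {X : Type*} [NormedAddCommGroup X] [NormedSpace ℝ X]
    (G : ℝ × X → X) (hGcont : Continuous G)
    (hGcompact : ∀ B : Set (ℝ × X), IsBounded B → IsCompact (closure (G '' B)))
    (l₀ : ℝ) (u₀ : X) (hG : ∀ u : X, G (l₀, u) = u₀) (s : ℝ) (hs : s * s = 1) :
    ¬ IsBounded (connectedComponentIn {p : ℝ × X | p.2 = G p ∧ 0 ≤ s * (p.1 - l₀)} (l₀, u₀)) := by
  intro hb
  set Z : Set (ℝ × X) := {p : ℝ × X | p.2 = G p ∧ 0 ≤ s * (p.1 - l₀)} with hZ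
  obtain ⟨R, hR, hsub⟩ := hb.subset_ball_lt 0 0
  have hZc : IsClosed Z := by
    apply IsClosed.inter
    · exact isClosed_eq continuous_snd hGcont
    · have hc : Continuous (fun p : ℝ × X => s * (p.1 - l₀)) := by fun_prop
      exact isClosed_le continuous_const hc
  have hp0 : (l₀, u₀) ∈ Z := ⟨(hG u₀).symm, by simp⟩
  set K : Set (ℝ × X) := Z ∩ Metric.closedBall 0 R with hKdef
  have hKc : IsCompact K := by
    refine ((isCompact_Icc (a := -R) (b := R)).prod
      (hGcompact (Metric.closedBall 0 R) Metric.isBounded_closedBall)).of_isClosed_subset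
      (hZc.inter Metric.isClosed_closedBall) ?_
    rintro p ⟨⟨hp, -⟩, hpb⟩
    refine ⟨?_, ?_⟩
    · rw [mem_closedBall_zero_iff] at hpb
      have := (norm_fst_le p).trans hpb
      rw [Real.norm_eq_abs, abs_le] at this
      exact this
    · rw [hp]
      exact subset_closure ⟨p, hpb, rfl⟩
  have hp0b : (l₀, u₀) ∈ Metric.ball (0 : ℝ × X) R := hsub (mem_connectedComponentIn hp0)
  have hp0K : (l₀, u₀) ∈ K := ⟨hp0, Metric.ball_subset_closedBall hp0b⟩
  have : CompactSpace K := isCompact_iff_compactSpace.mp hKc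
  let x0 : K := ⟨(l₀, u₀), hp0K⟩
  have hcomp : ∀ x : K, x ∈ connectedComponent x0 → (x : ℝ × X) ∈ Metric.ball (0 : ℝ × X) R := by
    intro x hx
    apply hsub
    have h1 : (x : ℝ × X) ∈ connectedComponentIn K (l₀, u₀) := by
      rw [connectedComponentIn_eq_image hp0K]
      exact ⟨x, hx, rfl⟩
    exact connectedComponentIn_mono _ inter_subset_left h1
  have hUc : IsCompact {x : K | (x : ℝ × X) ∉ Metric.ball (0 : ℝ × X) R} := by
    apply IsClosed.isCompact
    exact (Metric.isOpen_ball.preimage continuous_subtype_val).isClosed_compl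
  obtain ⟨w, hw⟩ := hUc.elim_finite_subfamily_closed
    (fun t : { t : Set K // IsClopen t ∧ x0 ∈ t } => (t : Set K)) (fun t => t.2.1.1) (by
      rw [← connectedComponent_eq_iInter_isClopen]
      ext x
      simp only [mem_inter_iff, mem_ofPred_eq, mem_empty_iff_false, iff_false, not_and]
      exact fun h1 h2 => h1 (hcomp x h2))
  set A' : Set K := ⋂ i ∈ w, (i : Set K) with hA'
  have hA'c : IsClopen A' := isClopen_biInter_finset fun i _ => i.2.1
  have hx0A : x0 ∈ A' := mem_iInter₂.mpr fun i _ => i.2.2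
  have hA'b : ∀ x ∈ A', (x : ℝ × X) ∈ Metric.ball (0 : ℝ × X) R := by
    intro x hx
    by_contra hcon
    have : x ∈ (∅ : Set K) := hw ▸ ⟨hcon, hx⟩
    exact this
  set A : Set (ℝ × X) := Subtype.val '' A' with hA
  set B : Set (ℝ × X) := Subtype.val '' A'ᶜ ∪ {p | R ≤ ‖p‖} with hB
  have hAc : IsClosed A := (hA'c.1.isCompact.image continuous_subtype_val).isClosed
  have hBc : IsClosed B := by
    apply IsClosed.union
    · exact (hA'c.compl.1.isCompact.image continuous_subtype_val).isClosed
    · exact isClosed_le continuous_const continuous_norm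
  have hdisj : Disjoint B A := by
    rw [Set.disjoint_left]
    rintro p hpB ⟨x, hx, rfl⟩
    rcases hpB with ⟨y, hy, hyx⟩ | h
    · exact hy (Subtype.val_injective hyx ▸ hx)
    · have := hA'b x hx
      rw [mem_ball_zero_iff] at this
      exact absurd h (not_le.mpr this)
  have hZAB : ∀ p ∈ Z, p ∉ B → p ∈ A := by
    intro p hp hpB
    have h1 : ‖p‖ < R := by
      by_contra h
      exact hpB (Or.inr (not_lt.mp h))
    have hpK : p ∈ K := ⟨hp, by rw [mem_closedBall_zero_iff]; exact h1.le⟩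
    by_cases h : (⟨p, hpK⟩ : K) ∈ A'
    · exact ⟨_, h, rfl⟩
    · exact absurd (Or.inl ⟨⟨p, hpK⟩, h, rfl⟩) hpB
  obtain ⟨φ, hφ0, hφ1, hφ⟩ := exists_continuous_zero_one_of_isClosed hBc hAc hdisj
  set M : ℝ := R + |l₀| with hM
  let ρ : ℝ × X → ℝ := fun p => max 0 (min 1 (2 - ‖p‖ / R))
  have hρc : Continuous ρ := by fun_prop
  let T : ℝ × X → ℝ × X := fun p => (l₀ + s * M * φ p, u₀ + ρ p • (G p - u₀))
  have hT : Continuous T := by fun_prop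
  have hQ := hGcompact (Metric.closedBall 0 (2 * R)) Metric.isBounded_closedBall
  obtain ⟨p, hp⟩ := gc_schauder T hT
    ((fun q : ℝ × ℝ × X => (l₀ + s * M * q.1, u₀ + q.2.1 • (q.2.2 - u₀))) ''
      (Icc (0 : ℝ) 1 ×ˢ Icc (0 : ℝ) 1 ×ˢ closure (G '' Metric.closedBall 0 (2 * R))))
    ((isCompact_Icc.prod (isCompact_Icc.prod hQ)).image (by fun_prop)) (by
      intro p
      by_cases hpb : ‖p‖ ≤ 2 * R
      · refine ⟨(φ p, ρ p, G p), ⟨hφ p, ⟨le_max_left _ _, ?_⟩, ?_⟩, rfl⟩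
        · exact max_le zero_le_one (min_le_left _ _)
        · exact subset_closure ⟨p, by rw [mem_closedBall_zero_iff]; exact hpb, rfl⟩
      · have hρ0 : ρ p = 0 := by
          have : 2 < ‖p‖ / R := by rw [lt_div_iff₀ hR]; linarith
          exact max_eq_left ((min_le_right _ _).trans (by linarith))
        refine ⟨(φ p, 0, G 0), ⟨hφ p, ⟨le_rfl, zero_le_one⟩, ?_⟩, ?_⟩
        · exact subset_closure ⟨0, by rw [mem_closedBall_zero_iff]; simp [hR.le], rfl⟩
        · simp [T, hρ0])
  have e1 : l₀ + s * M * φ p = p.1 := congrArg Prod.fst hp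
  have e2 : u₀ + ρ p • (G p - u₀) = p.2 := congrArg Prod.snd hp
  have hp0A : (l₀, u₀) ∈ A := ⟨x0, hx0A, rfl⟩
  have hφne : φ p ≠ 0 := by
    intro h
    rw [h, mul_zero, add_zero] at e1
    have hGp : G p = u₀ := by
      have : p = (l₀, p.2) := Prod.ext e1.symm rfl
      rw [this]; exact hG _
    rw [hGp, sub_self, smul_zero, add_zero] at e2
    have hpp : p = (l₀, u₀) := Prod.ext e1.symm e2.symm
    have h1 := hφ1 hp0A
    rw [← hpp, h] at h1
    simp at h1
  have hpB : p ∉ B := fun h => hφne (hφ0 h)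
  have hpR : ‖p‖ < R := by
    by_contra h
    exact hpB (Or.inr (not_lt.mp h))
  have hρ1 : ρ p = 1 := by
    have : ‖p‖ / R ≤ 1 := by rw [div_le_one hR]; exact hpR.le
    simp only [ρ]
    rw [min_eq_left (by linarith), max_eq_right zero_le_one]
  have hM0 : 0 ≤ M := by positivity
  have hpZ : p ∈ Z := by
    refine ⟨?_, ?_⟩
    · rw [← e2, hρ1, one_smul, add_sub_cancel]
    · rw [← e1]
      have : s * (l₀ + s * M * φ p - l₀) = (s * s) * (M * φ p) := by ring
      rw [this, hs, one_mul]
      exact mul_nonneg hM0 (hφ p).1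
  have hφp : φ p = 1 := hφ1 (hZAB p hpZ hpB)
  rw [hφp, mul_one] at e1
  have h1 : |p.1| < R := lt_of_le_of_lt (norm_fst_le p) hpR
  have h2 : |s| = 1 := by
    have := abs_mul_abs_self s
    rw [hs] at this
    nlinarith [abs_nonneg s]
  have h3 : |s * M| = M := by rw [abs_mul, h2, one_mul, abs_of_nonneg hM0]
  have h4 : |s * M| ≤ |p.1| + |l₀| := by
    have : s * M = p.1 - l₀ := by linarith
    rw [this]; exact abs_sub _ _
  linarith

/-- Rabinowitz's global continuation theorem for compact perturbations of the identity. -/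
theorem global_continuation_compact {X : Type*}
    [NormedAddCommGroup X] [NormedSpace ℝ X] [CompleteSpace X]
    (G : ℝ × X → X) (hGcont : Continuous G)
    (hGcompact : ∀ B : Set (ℝ × X), IsBounded B → IsCompact (closure (G '' B)))
    (l₀ : ℝ) (u₀ : X)
    (hG : ∀ u : X, G (l₀, u) = u₀) :
    let F : ℝ × X → X := fun p => p.2 - G p
    let S : Set (ℝ × X) :=
      closure {p : ℝ × X | F p = 0 ∧ p ≠ (l₀, u₀)} ∪ {(l₀, u₀)}
    let Cp : Set (ℝ × X) :=
      connectedComponentIn (S ∩ (Set.Ici l₀ ×ˢ (Set.univ : Set X))) (l₀, u₀)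
    let Cm : Set (ℝ × X) :=
      connectedComponentIn (S ∩ (Set.Iic l₀ ×ˢ (Set.univ : Set X))) (l₀, u₀)
    ¬ IsBounded Cp ∧ ¬ IsBounded Cm ∧ Cp ∩ Cm = {(l₀, u₀)} := by
  intro F S Cp Cm
  have hS : S = {p : ℝ × X | p.2 = G p} := by
    have hcl : IsClosed {p : ℝ × X | p.2 = G p} := isClosed_eq continuous_snd hGcont
    apply Subset.antisymm
    · apply union_subset
      · apply closure_minimal _ hcl
        rintro p ⟨hp, -⟩
        exact sub_eq_zero.mp hp
      · rintro p rfl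
        exact (hG u₀).symm
    · intro p hp
      by_cases h : p = (l₀, u₀)
      · exact Or.inr h
      · exact Or.inl (subset_closure ⟨sub_eq_zero.mpr hp, h⟩)
  have hSp : S ∩ (Set.Ici l₀ ×ˢ (Set.univ : Set X)) =
      {p : ℝ × X | p.2 = G p ∧ 0 ≤ (1 : ℝ) * (p.1 - l₀)} := by
    rw [hS]; ext p; simp
  have hSm : S ∩ (Set.Iic l₀ ×ˢ (Set.univ : Set X)) =
      {p : ℝ × X | p.2 = G p ∧ 0 ≤ (-1 : ℝ) * (p.1 - l₀)} := by
    rw [hS]; ext p; simp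
  refine ⟨?_, ?_, ?_⟩
  · simp only [Cp]
    rw [hSp]
    exact gc_half G hGcont hGcompact l₀ u₀ hG 1 (by norm_num)
  · simp only [Cm]
    rw [hSm]
    exact gc_half G hGcont hGcompact l₀ u₀ hG (-1) (by norm_num)
  · apply Subset.antisymm
    · rintro p ⟨h1, h2⟩
      have h1 := connectedComponentIn_subset _ _ h1
      have h2 := connectedComponentIn_subset _ _ h2
      have e1 : p.1 = l₀ := le_antisymm h2.2.1 h1.2.1
      have e2 : p.2 = G p := by
        have := h1.1
        rw [hS] at this
        exact this
      have e3 : p = (l₀, p.2) := Prod.ext e1 rfl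
      rw [e3, hG] at e2
      exact Prod.ext e1 e2
    · rintro p rfl
      have hm : (l₀, u₀) ∈ S := Or.inr rfl
      exact ⟨mem_connectedComponentIn ⟨hm, by simp⟩, mem_connectedComponentIn ⟨hm, by simp⟩⟩
end

section
/- Let K be a compact metric space and let A and B be disjoint closed subsets of K. Then either there exists a sub-continuum of K (a compact connected subset of K) meeting both A and B, or K = K_A ∪ K_B, where K_A and K_B are disjoint compact subsets of K containing A and B, respectively. -/
open Set

/-- Whyburn's lemma: in a compact metric space `K`, for disjoint closed sets `A` and `B`,
either some sub-continuum of `K` meets both `A` and `B`, or `K` splits as the union of two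
disjoint compact sets containing `A` and `B` respectively. -/
theorem whyburn_lemma {K : Type*} [MetricSpace K] [CompactSpace K]
    (A B : Set K) (hA : IsClosed A) (hB : IsClosed B) (hAB : Disjoint A B) :
    (∃ C : Set K, IsCompact C ∧ IsConnected C ∧ (C ∩ A).Nonempty ∧ (C ∩ B).Nonempty) ∨
    (∃ KA KB : Set K, IsCompact KA ∧ IsCompact KB ∧ Disjoint KA KB ∧
      A ⊆ KA ∧ B ⊆ KB ∧ KA ∪ KB = Set.univ) := by
  by_cases h : ∃ a ∈ A, ∃ b ∈ B, b ∈ connectedComponent a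
  · obtain ⟨a, ha, b, hb, hab⟩ := h
    exact Or.inl ⟨connectedComponent a, isClosed_connectedComponent.isCompact,
      isConnected_connectedComponent, ⟨a, mem_connectedComponent, ha⟩, ⟨b, hab, hb⟩⟩
  · right
    push Not at h
    have key : ∀ a ∈ A, ∃ U : Set K, IsClopen U ∧ a ∈ U ∧ Disjoint U B := by
      intro a ha
      refine hB.isCompact.induction_on
        (p := fun T => ∃ U : Set K, IsClopen U ∧ a ∈ U ∧ Disjoint U T) ?_ ?_ ?_ ?_
      · exact ⟨univ, isClopen_univ, mem_univ _, disjoint_bot_right⟩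
      · rintro S T hST ⟨U, hU, haU, hd⟩
        exact ⟨U, hU, haU, hd.mono_right hST⟩
      · rintro S T ⟨U, hU, haU, hd⟩ ⟨V, hV, haV, hd'⟩
        exact ⟨U ∩ V, hU.inter hV, ⟨haU, haV⟩, disjoint_union_right.2
          ⟨hd.mono_left inter_subset_left, hd'.mono_left inter_subset_right⟩⟩
      · intro b hb
        have hab := h a ha b hb
        rw [connectedComponent_eq_iInter_isClopen, mem_iInter] at hab
        push Not at hab
        obtain ⟨⟨U, hU, haU⟩, hbU⟩ := hab
        exact ⟨Uᶜ, mem_nhdsWithin_of_mem_nhds (hU.compl.isOpen.mem_nhds hbU), U, hU, haU,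
          disjoint_compl_right⟩
    have key2 : ∃ U : Set K, IsClopen U ∧ A ⊆ U ∧ Disjoint U B := by
      refine hA.isCompact.induction_on
        (p := fun T => ∃ U : Set K, IsClopen U ∧ T ⊆ U ∧ Disjoint U B) ?_ ?_ ?_ ?_
      · exact ⟨∅, isClopen_empty, Subset.rfl, disjoint_bot_left⟩
      · rintro S T hST ⟨U, hU, haU, hd⟩
        exact ⟨U, hU, hST.trans haU, hd⟩
      · rintro S T ⟨U, hU, haU, hd⟩ ⟨V, hV, haV, hd'⟩
        exact ⟨U ∪ V, hU.union hV, union_subset_union haU haV, disjoint_union_left.2 ⟨hd, hd'⟩⟩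
      · intro a ha
        obtain ⟨U, hU, haU, hd⟩ := key a ha
        exact ⟨U, mem_nhdsWithin_of_mem_nhds (hU.isOpen.mem_nhds haU), U, hU, Subset.rfl, hd⟩
    obtain ⟨U, hU, hAU, hd⟩ := key2
    exact ⟨U, Uᶜ, hU.isClosed.isCompact, hU.compl.isClosed.isCompact, disjoint_compl_right,
      hAU, hd.subset_compl_left, union_compl_self U⟩
end

section
/- Let Ω ⊆ ℝ² be an open, connected, simply connected set, and let V = (V₁, V₂) : Ω → ℝ² be a continuously differentiable vector field that is divergence free on Ω, i.e. ∂ₓV₁ + ∂_y V₂ = 0 at every point of Ω. Then there exists a differentiable function ψ : Ω → ℝ (a stream function) such that V = ∇⊥ψ on Ω, that is, V₁ = −∂_y ψ and V₂ = ∂ₓ ψ at every point of Ω. -/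
open Set

/-- The real line with the discrete topology. -/
def DiscR : Type := ℝ

noncomputable instance : AddCommGroup DiscR := inferInstanceAs (AddCommGroup ℝ)
instance : TopologicalSpace DiscR := ⊥
instance : DiscreteTopology DiscR := ⟨rfl⟩

/-- The bundle of germs of primitives. -/
noncomputable def primCore (Ω : Set (ℝ × ℝ)) (ω : ℝ × ℝ → (ℝ × ℝ →L[ℝ] ℝ)) (r : Ω → ℝ)
    (hr : ∀ i, 0 < r i) (g : Ω → ℝ × ℝ → ℝ)
    (hg : ∀ i : Ω, ∀ a ∈ Metric.ball (i : ℝ × ℝ) (r i), HasFDerivAt (g i) (ω a) a) :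
    FiberBundleCore Ω Ω DiscR where
  baseSet i := {x | (x : ℝ × ℝ) ∈ Metric.ball (i : ℝ × ℝ) (r i)}
  isOpen_baseSet i := Metric.isOpen_ball.preimage continuous_subtype_val
  indexAt x := x
  mem_baseSet_at x := Metric.mem_ball_self (hr x)
  coordChange i j x v := v + (show DiscR from (g i x - g j x : ℝ))
  coordChange_self i x _ v := by
    have : (g i x - g i x : ℝ) = 0 := sub_self _
    rw [this]
    exact add_zero v
  continuousOn_coordChange i j := by
    rintro ⟨x₀, v₀⟩ ⟨hx₀, -⟩
    have hc : Continuous fun p : Ω × DiscR =>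
        p.2 + (show DiscR from (g i x₀ - g j x₀ : ℝ)) :=
      (continuous_of_discreteTopology (f := fun v : DiscR =>
        v + (show DiscR from (g i x₀ - g j x₀ : ℝ)))).comp continuous_snd
    refine hc.continuousOn.congr (s := _) ?_ (x₀, v₀) ⟨hx₀, trivial⟩
    rintro ⟨x, v⟩ ⟨hx, -⟩
    have h : g i x - g j x = g i x₀ - g j x₀ := by
      have hd : ∀ y ∈ Metric.ball (i : ℝ × ℝ) (r i) ∩ Metric.ball (j : ℝ × ℝ) (r j),
          HasFDerivAt (fun z => g i z - g j z) (0 : ℝ × ℝ →L[ℝ] ℝ) y := by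
        intro y hy
        simpa using (hg i y hy.1).fun_sub (hg j y hy.2)
      exact (Metric.isOpen_ball.inter Metric.isOpen_ball).is_const_of_fderiv_eq_zero (𝕜 := ℝ)
        ((convex_ball _ _).inter (convex_ball _ _)).isPreconnected
        (fun y hy => (hd y hy).differentiableAt.differentiableWithinAt)
        (fun y hy => (hd y hy).fderiv) hx hx₀
    dsimp only
    rw [h]
  coordChange_comp i j k x _ v := by
    exact (by intro v; ring : ∀ v : ℝ, v + (g i x - g j x) + (g j x - g k x)
      = v + (g i x - g k x)) v

theorem exists_primitive (Ω : Set (ℝ × ℝ)) (hΩ : IsOpen Ω) (hne : Ω.Nonempty)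
    (hsc : SimplyConnectedSpace ↥Ω)
    (ω : ℝ × ℝ → (ℝ × ℝ →L[ℝ] ℝ)) (r : Ω → ℝ)
    (hr : ∀ i, 0 < r i) (g : Ω → ℝ × ℝ → ℝ)
    (hg : ∀ i : Ω, ∀ a ∈ Metric.ball (i : ℝ × ℝ) (r i), HasFDerivAt (g i) (ω a) a) :
    ∃ ψ : ℝ × ℝ → ℝ, ∀ p ∈ Ω, HasFDerivAt ψ (ω p) p := by
  classical
  let Z := primCore Ω ω r hr g hg
  have : LocallyPathConnectedSpace Ω := hΩ.locallyPathConnectedSpace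
  obtain ⟨p₀, hp₀⟩ := hne
  have cov : IsCoveringMap (Bundle.TotalSpace.proj (F := DiscR) (E := Z.Fiber)) :=
    FiberBundle.isCoveringMap
  obtain ⟨F, ⟨-, hF⟩, -⟩ := cov.existsUnique_continuousMap_lifts (ContinuousMap.id Ω) ⟨p₀, hp₀⟩
    ⟨⟨p₀, hp₀⟩, (0 : DiscR)⟩ rfl
  have hF1 : ∀ x, (F x).proj = x := fun x => congrFun hF x
  let s : Ω → ℝ := fun x => (F x).2
  refine ⟨fun p => if h : p ∈ Ω then g ⟨p, h⟩ p + s ⟨p, h⟩ else 0, fun p hp => ?_⟩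
  let x₀ : Ω := ⟨p, hp⟩
  have hcont : ContinuousAt (fun x => (Z.localTriv x₀ (F x)).2) x₀ := by
    have h1 : ContinuousAt (Z.localTriv x₀) (F x₀) := by
      apply (Z.localTriv x₀).continuousAt
      rw [FiberBundleCore.mem_localTriv_source, hF1]
      exact Z.mem_baseSet_at x₀
    exact continuousAt_snd.comp (ContinuousAt.comp (f := F) h1 F.continuous.continuousAt)
  have hev : ∀ᶠ x in nhds x₀, (Z.localTriv x₀ (F x)).2 = (Z.localTriv x₀ (F x₀)).2 :=
    (hcont.eventually (p := fun y => (Z.localTriv x₀ (F x₀)).2 = y)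
      (by rw [nhds_discrete]; exact Filter.eventually_pure.2 rfl)).mono fun _ h => h.symm
  have hval : ∀ x : Ω, (Z.localTriv x₀ (F x)).2 = (s x + (g x x - g x₀ x) : ℝ) := by
    intro x
    change (s x + (g (F x).proj (F x).proj - g x₀ (F x).proj) : ℝ) = _
    rw [hF1]
  have hev2 : ∀ᶠ x : Ω in nhds x₀, g x x + s x = g x₀ x + s x₀ := by
    filter_upwards [hev] with x hx
    rw [hval, hval] at hx
    have hx' : s x + (g x x - g x₀ x) = s x₀ + (g x₀ x₀ - g x₀ x₀) := hx
    clear hx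
    exact (by intro a b c d e h; linarith :
      ∀ a b c d e : ℝ, a + (b - c) = d + (e - e) → b + a = c + d) _ _ _ _ _ hx'
  have hev3 : ∀ᶠ q in nhds p, ∀ h : q ∈ Ω, g ⟨q, h⟩ q + s ⟨q, h⟩ = g x₀ q + s x₀ := by
    rw [nhds_subtype_eq_comap, Filter.eventually_comap] at hev2
    filter_upwards [hev2] with q hq h
    exact hq ⟨q, h⟩ rfl
  have hd : HasFDerivAt (fun q => g x₀ q + s x₀) (ω p) p :=
    (hg x₀ p (Metric.mem_ball_self (hr x₀))).add_const _
  refine hd.congr_of_eventuallyEq ?_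
  filter_upwards [hev3, hΩ.mem_nhds hp] with q hq hqΩ
  simp only [dif_pos hqΩ]
  exact hq hqΩ

/-- The 1-form `V₂ dx - V₁ dy` as a linear function of the value of `V`. -/
noncomputable def streamForm : (ℝ × ℝ) →L[ℝ] (ℝ × ℝ →L[ℝ] ℝ) :=
  (ContinuousLinearMap.snd ℝ ℝ ℝ).smulRight (ContinuousLinearMap.fst ℝ ℝ ℝ)
    - (ContinuousLinearMap.fst ℝ ℝ ℝ).smulRight (ContinuousLinearMap.snd ℝ ℝ ℝ)

theorem streamForm_apply (v u : ℝ × ℝ) : streamForm v u = v.2 * u.1 - v.1 * u.2 := by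
  simp [streamForm]

/-- Existence of a stream function: a `C¹` divergence-free vector field on an open, connected,
simply connected planar domain is of the form `V = ∇⊥ψ = (-∂_y ψ, ∂ₓ ψ)`. -/
theorem exists_stream_function (Ω : Set (ℝ × ℝ)) (hΩ : IsOpen Ω) (hconn : IsConnected Ω)
    (hsc : SimplyConnectedSpace ↥Ω)
    (V : ℝ × ℝ → ℝ × ℝ) (hV : ContDiffOn ℝ 1 V Ω)
    (hdiv : ∀ p ∈ Ω,
      fderiv ℝ (fun q => (V q).1) p (1, 0) + fderiv ℝ (fun q => (V q).2) p (0, 1) = 0) :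
    ∃ ψ : ℝ × ℝ → ℝ, ∀ p ∈ Ω, DifferentiableAt ℝ ψ p ∧
      (V p).1 = -(fderiv ℝ ψ p (0, 1)) ∧ (V p).2 = fderiv ℝ ψ p (1, 0) := by
  have hVd : ∀ p ∈ Ω, HasFDerivAt V (fderiv ℝ V p) p := fun p hp =>
    ((hV.differentiableOn (by simp)).differentiableAt (hΩ.mem_nhds hp)).hasFDerivAt
  have hω : ∀ p ∈ Ω, HasFDerivAt (fun q => streamForm (V q)) (streamForm ∘L fderiv ℝ V p) p :=
    fun p hp => streamForm.hasFDerivAt.comp p (hVd p hp)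
  have hsymm : ∀ p ∈ Ω, ∀ x y, fderiv ℝ (fun q => streamForm (V q)) p x y =
      fderiv ℝ (fun q => streamForm (V q)) p y x := by
    intro p hp x y
    rw [(hω p hp).fderiv]
    have h := hdiv p hp
    rw [(hVd p hp).fst.fderiv, (hVd p hp).snd.fderiv] at h
    simp only [ContinuousLinearMap.comp_apply, ContinuousLinearMap.coe_fst',
      ContinuousLinearMap.coe_snd'] at h
    simp only [ContinuousLinearMap.comp_apply, streamForm_apply]
    have hx : ∀ x : ℝ × ℝ, fderiv ℝ V p x =
        x.1 • fderiv ℝ V p (1, 0) + x.2 • fderiv ℝ V p (0, 1) := by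
      intro x
      rw [← map_smul, ← map_smul, ← map_add]
      simp
    rw [hx x, hx y]
    simp only [Prod.fst_add, Prod.snd_add, Prod.smul_fst, Prod.smul_snd, smul_eq_mul]
    linear_combination (x.2 * y.1 - x.1 * y.2) * h
  have hloc : ∀ i : Ω, ∃ r : ℝ, 0 < r ∧ ∃ g : ℝ × ℝ → ℝ,
      ∀ a ∈ Metric.ball (i : ℝ × ℝ) r, HasFDerivAt g (streamForm (V a)) a := by
    intro i
    obtain ⟨r, hr, hb⟩ := Metric.isOpen_iff.1 hΩ i i.2
    exact ⟨r, hr, (convex_ball _ _).exists_forall_hasFDerivAt_of_fderiv_symmetric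
      Metric.isOpen_ball
      (fun a ha => (hω a (hb ha)).differentiableAt.differentiableWithinAt)
      (fun a ha => hsymm a (hb ha))⟩
  choose r hr g hg using hloc
  obtain ⟨ψ, hψ⟩ := exists_primitive Ω hΩ hconn.nonempty hsc (fun q => streamForm (V q)) r hr g hg
  refine ⟨ψ, fun p hp => ⟨(hψ p hp).differentiableAt, ?_, ?_⟩⟩ <;>
  · rw [(hψ p hp).fderiv, streamForm_apply]
    simp
end
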